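/- arXiv:2512.22413 — 3 statements merged into one kernel-verified Lean document; each statement's English description precedes it below -/
import Mathlib

section
/- For every natural number n ≥ 5 there exists a prime p with 8·n < p < 9·n. -/
/-!
This is Chebyshev's method with weights adapted to the interval `(8n, 9n]`. Since
`log k! = ∑ m ≤ k, Λ m * ⌊k / m⌋`, attaching integers `c d` to certain divisors `d` of `5040` gives,
for `x = 72 n`,

  `∑ d, c d * log ⌊x / d⌋! = ∑ m ≤ x, Λ m * F ⌊x / m⌋`, where `F s = ∑ d, c d * ⌊s / d⌋`.

The weights satisfy `∑ c d / d = 0`, so `F` has period `5040`; over one period `F` is at most `0`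
except at `8`, where it is `1`. As `⌊72 n / m⌋ = 8` means `8 n < m ≤ 9 n`, the right-hand side is at
most `ψ (9 n) - ψ (8 n) + ψ (n / 70)`, and here `ψ (n / 70)` is at most `log 4 / 70 * n` up to
`O(√n)`. By Stirling's formula the left-hand side is `-72 n * ∑ c d * log d / d + O(log n)`, whose
main term is at least `4 * log 4 / 70 * n`. Hence `θ (8 n) < θ (9 n)` for large `n`, and an explicit
chain of primes serves the remaining `n`.
-/

open Finset
open scoped Nat ArithmeticFunction.vonMangoldt Chebyshev

/-! ### Combinations of floor functions -/

/-- The step function `s ↦ ∑ c * ⌊s / d⌋`, summed over the pairs `(d, c)` in `W`. -/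
def floorSum (W : Finset (ℕ × ℤ)) (s : ℕ) : ℤ :=
  ∑ w ∈ W, w.2 * (s / w.1 : ℕ)

section FloorSum

variable {W : Finset (ℕ × ℤ)} {N : ℕ}

theorem floorSum_add (hW : ∀ w ∈ W, w.1 ∣ N) (s : ℕ) :
    floorSum W (s + N) = floorSum W s + floorSum W N := by
  simp only [floorSum, ← sum_add_distrib, ← mul_add]
  exact sum_congr rfl fun w hw ↦ by rw [Nat.add_div_of_dvd_left (hW w hw), Nat.cast_add]

theorem floorSum_periodic (hW : ∀ w ∈ W, w.1 ∣ N) (h0 : floorSum W N = 0) :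
    Function.Periodic (floorSum W) N := fun s ↦ by
  rw [floorSum_add hW, h0, add_zero]

theorem cast_floorSum_of_dvd (hW : ∀ w ∈ W, w.1 ∣ N) :
    (floorSum W N : ℝ) = N * ∑ w ∈ W, (w.2 : ℝ) / w.1 := by
  rw [floorSum, Int.cast_sum, mul_sum]
  refine sum_congr rfl fun w hw ↦ ?_
  rw [Int.cast_mul, Int.cast_natCast, Nat.cast_div_charZero (hW w hw)]
  ring

theorem log_prod_zpow_eq (hW : ∀ w ∈ W, w.1 ∣ N) (hN : N ≠ 0) :
    Real.log (∏ w ∈ W, (w.1 : ℝ) ^ (w.2 * (N / w.1 : ℕ))) =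
      N * ∑ w ∈ W, w.2 * Real.log w.1 / w.1 := by
  have hne (w) (hw : w ∈ W) : (w.1 : ℝ) ≠ 0 :=
    Nat.cast_ne_zero.mpr (ne_zero_of_dvd_ne_zero hN (hW w hw))
  rw [Real.log_prod fun w hw ↦ zpow_ne_zero _ (hne w hw), mul_sum]
  refine sum_congr rfl fun w hw ↦ ?_
  rw [Real.log_zpow, Int.cast_mul, Int.cast_natCast, Nat.cast_div_charZero (hW w hw)]
  ring

end FloorSum

/-! ### Logarithms of factorials -/

theorem log_factorial_eq_sum_vonMangoldt {k x : ℕ} (h : k ≤ x) :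
    Real.log k ! = ∑ m ∈ Ioc 0 x, Λ m * (k / m : ℕ) := by
  have hvanish (m) (_ : m ∈ Ioc 0 x) (hm : m ∉ Ioc 0 k) : Λ m * ((k / m : ℕ) : ℝ) = 0 := by
    rw [Nat.div_eq_of_lt (by simp_all), Nat.cast_zero, mul_zero]
  rw [← sum_subset (Ioc_subset_Ioc_right h) hvanish,
    ← ArithmeticFunction.sum_Ioc_mul_zeta_eq_sum, ArithmeticFunction.vonMangoldt_mul_zeta,
    ← prod_Ico_id_eq_factorial, Nat.cast_prod, Real.log_prod (by simp; omega)]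
  rfl

theorem sum_mul_log_factorial_eq (W : Finset (ℕ × ℤ)) (x : ℕ) :
    ∑ w ∈ W, w.2 * Real.log (x / w.1)! = ∑ m ∈ Ioc 0 x, Λ m * floorSum W (x / m) := by
  simp only [log_factorial_eq_sum_vonMangoldt (Nat.div_le_self x _), floorSum, Int.cast_sum,
    mul_sum]
  rw [sum_comm]
  refine sum_congr rfl fun m _ ↦ sum_congr rfl fun w _ ↦ ?_
  rw [Nat.div_div_eq_div_mul, mul_comm w.1, ← Nat.div_div_eq_div_mul, Int.cast_mul,
    Int.cast_natCast]
  ring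

theorem sub_mul_log_le_sub {a b : ℝ} (ha : 0 < a) (hb : 0 < b) :
    (b - a) * Real.log a ≤ (b * Real.log b - b) - (a * Real.log a - a) := by
  have h : 1 - a / b ≤ Real.log b - Real.log a := by
    rw [← Real.log_div hb.ne' ha.ne', ← inv_div b a]
    exact Real.one_sub_inv_le_log_of_pos (by positivity)
  have h' : b - a ≤ b * (Real.log b - Real.log a) := by
    calc b - a = b * (1 - a / b) := by field_simp
      _ ≤ _ := by gcongr
  linarith

theorem log_factorial_le {k : ℕ} (hk : 1 ≤ k) :
    Real.log k ! ≤ k * Real.log k - k + Real.log k + 1 := by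
  induction k, hk using Nat.le_induction with
  | base => simp
  | succ k hk ih =>
    have htangent := sub_mul_log_le_sub (a := k) (b := k + 1) (by positivity) (by positivity)
    rw [Nat.factorial_succ, Nat.cast_mul, Real.log_mul (by positivity) (by positivity)]
    push_cast
    linarith

theorem abs_log_factorial_floor_sub_le {y : ℝ} (hy : 1 ≤ y) :
    |Real.log ⌊y⌋₊ ! - (y * Real.log y - y)| ≤ Real.log y + 1 := by
  have hk : 1 ≤ ⌊y⌋₊ := (Nat.one_le_floor_iff y).mpr hy
  have hy0 : 0 < y := by linarith
  have hk1 : (1 : ℝ) ≤ ⌊y⌋₊ := by exact_mod_cast hk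
  have hky : (⌊y⌋₊ : ℝ) ≤ y := Nat.floor_le (by linarith)
  have hlog : Real.log ⌊y⌋₊ ≤ Real.log y := Real.log_le_log (by linarith) hky
  have hlog0 : 0 ≤ Real.log ⌊y⌋₊ := Real.log_nonneg hk1
  have hupper := log_factorial_le hk
  have hlower := Stirling.le_log_factorial_stirling (Nat.one_le_iff_ne_zero.mp hk)
  have hpi : 0 ≤ Real.log (2 * Real.pi) := Real.log_nonneg (by linarith [Real.pi_gt_three])
  have hinc : 0 ≤ (y - ⌊y⌋₊) * Real.log ⌊y⌋₊ := mul_nonneg (by linarith) hlog0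
  have hfrac : (y - ⌊y⌋₊) * Real.log y ≤ 1 * Real.log y :=
    mul_le_mul_of_nonneg_right (by linarith [Nat.lt_floor_add_one y]) (hlog0.trans hlog)
  have htangent := sub_mul_log_le_sub (a := ⌊y⌋₊) (b := y) (by linarith) hy0
  have htangent' := sub_mul_log_le_sub (a := y) (b := ⌊y⌋₊) hy0 (by linarith)
  rw [abs_le]
  constructor <;> linarith

theorem abs_sum_mul_log_factorial_sub_le {W : Finset (ℕ × ℤ)} {x : ℕ}
    (hW : ∀ w ∈ W, 0 < w.1 ∧ w.1 ≤ x) :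
    |∑ w ∈ W, w.2 * Real.log (x / w.1)! -
        x * ((Real.log x - 1) * ∑ w ∈ W, (w.2 : ℝ) / w.1 -
          ∑ w ∈ W, w.2 * Real.log w.1 / w.1)| ≤
      (Real.log x + 1) * ∑ w ∈ W, |(w.2 : ℝ)| := by
  rw [mul_sum, ← sum_sub_distrib, mul_sum, ← sum_sub_distrib, mul_sum]
  refine (abs_sum_le_sum_abs _ _).trans (sum_le_sum fun w hw ↦ ?_)
  obtain ⟨hd, hdx⟩ := hW w hw
  have hd1 : (1 : ℝ) ≤ w.1 := by exact_mod_cast hd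
  have hdx' : (w.1 : ℝ) ≤ x := by exact_mod_cast hdx
  have hstirling := abs_log_factorial_floor_sub_le (y := x / w.1)
    (by rwa [one_le_div (by linarith)])
  rw [Nat.floor_div_eq_div, Real.log_div (by linarith) (by linarith)] at hstirling
  calc _ = |(w.2 : ℝ) * (Real.log (x / w.1)! -
          (x / w.1 * (Real.log x - Real.log w.1) - x / w.1))| := by ring_nf
    _ = |Real.log (x / w.1)! - (x / w.1 * (Real.log x - Real.log w.1) - x / w.1)| *
          |(w.2 : ℝ)| := by rw [abs_mul, mul_comm]
    _ ≤ _ := by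
      gcongr
      linarith [Real.log_nonneg hd1]

/-! ### Chebyshev's functions -/

theorem sum_vonMangoldt_filter_le_div (x : ℕ) {q : ℕ} (hq : 0 < q) :
    ∑ m ∈ Ioc 0 x with q ≤ x / m, Λ m = ψ (x / q) := by
  rw [Chebyshev.psi, Nat.floor_div_eq_div]
  congr 1
  ext m
  simp only [mem_filter, mem_Ioc]
  constructor
  · rintro ⟨⟨hm, -⟩, hqm⟩
    rw [Nat.le_div_iff_mul_le hm, mul_comm] at hqm
    exact ⟨hm, (Nat.le_div_iff_mul_le hq).mpr hqm⟩
  · rintro ⟨hm, hmq⟩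
    have hmqx := (Nat.le_div_iff_mul_le hq).mp hmq
    exact ⟨⟨hm, hmq.trans (Nat.div_le_self x q)⟩, (Nat.le_div_iff_mul_le hm).mpr (by linarith)⟩

theorem sum_vonMangoldt_mul_le {F : ℕ → ℝ} {k N : ℕ} (hk : 0 < k) (hN : 0 < N)
    (hF : ∀ s, F s ≤ (if s = k then 1 else 0) + if N ≤ s then 1 else 0) (x : ℕ) :
    ∑ m ∈ Ioc 0 x, Λ m * F (x / m) ≤ ψ (x / k) - ψ (x / (k + 1 : ℕ)) + ψ (x / N) := by
  rw [← sum_vonMangoldt_filter_le_div x hk, ← sum_vonMangoldt_filter_le_div x k.succ_pos,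
    ← sum_vonMangoldt_filter_le_div x hN]
  simp only [sum_filter, ← sum_sub_distrib, ← sum_add_distrib]
  refine sum_le_sum fun m _ ↦ ?_
  have hindicator : (if x / m = k then (1 : ℝ) else 0) =
      (if k ≤ x / m then 1 else 0) - if k + 1 ≤ x / m then 1 else 0 := by
    split_ifs <;> first | omega | norm_num
  calc Λ m * F (x / m)
      ≤ Λ m * ((if x / m = k then 1 else 0) + if N ≤ x / m then 1 else 0) :=
        mul_le_mul_of_nonneg_left (hF _) ArithmeticFunction.vonMangoldt_nonneg
    _ = _ := by rw [hindicator]; simp only [mul_add, mul_sub, mul_ite, mul_one, mul_zero]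

theorem psi_sub_theta_le_mul_sqrt {x : ℝ} (hx : 1 ≤ x) :
    ψ x - θ x ≤ 3 * (Real.log 4 + 4) * √x := by
  have hroot {r : ℝ} (hr : 2 ≤ r) : ψ (x ^ r⁻¹) ≤ (Real.log 4 + 4) * √x := by
    grw [Chebyshev.psi_le_const_mul_self (by positivity), Real.sqrt_eq_rpow]
    gcongr
    rw [one_div]
    gcongr
  linarith [Chebyshev.psi_sub_theta_le_psi_add_psi_add_psi x, hroot (r := 2) le_rfl,
    hroot (r := 3) (by norm_num), hroot (r := 5) (by norm_num)]

theorem exists_prime_of_theta_lt_theta {a b : ℝ} (h : θ a < θ b) :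
    ∃ p : ℕ, p.Prime ∧ a < p ∧ p ≤ b := by
  by_contra! hcon
  refine h.not_ge (sum_le_sum_of_subset_of_nonneg (fun p hp ↦ ?_) fun p _ _ ↦ ?_)
  · simp only [mem_filter, mem_Ioc] at hp ⊢
    obtain ⟨⟨hp0, hpb⟩, hp⟩ := hp
    rw [Nat.le_floor_iff' hp0.ne'] at hpb ⊢
    exact ⟨⟨hp0, not_lt.mp fun hap ↦ (hcon p hp hap).not_ge hpb⟩, hp⟩
  · exact Real.log_natCast_nonneg p

/-! ### The weights -/

/-- The pairs `(d, c)` of a divisor `d` of `5040` and its weight `c`. They come from a linear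
program: make `-∑ c * log d / d` large, with a small penalty on `∑ |c|`, subject to `∑ c / d = 0`
and to the bound `floorSum_weights_le_of_lt` over one period. The underlying list is given directly,
without `insert`, so that the kernel does not have to check for duplicates in every evaluation. -/
def weights : Finset (ℕ × ℤ) where
  val := [(8, 1), (9, -1), (16, -1), (18, 1), (24, -1), (28, 1), (40, -1), (45, 1), (48, 1),
    (56, -2), (63, 1), (80, 1), (84, -1), (90, -1), (112, 1), (120, 1), (126, -1), (140, -1),
    (144, -1), (168, 1), (180, 1), (240, -1), (280, 2), (360, -1), (420, 2), (560, -1), (630, 1),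
    (840, -2), (1008, 2), (1260, -1), (2520, 1), (5040, 3)]
  nodup := by decide +kernel

theorem dvd_of_mem_weights : ∀ w ∈ weights, w.1 ∣ 5040 := by
  decide +kernel

theorem floorSum_weights_self : floorSum weights 5040 = 0 := by
  decide +kernel

theorem sum_weights_div_eq_zero : ∑ w ∈ weights, (w.2 : ℝ) / w.1 = 0 := by
  have h := cast_floorSum_of_dvd dvd_of_mem_weights
  rw [floorSum_weights_self] at h
  simpa using h

theorem sum_abs_weights : ∑ w ∈ weights, |(w.2 : ℝ)| = 39 := by
  exact_mod_cast (by decide +kernel : ∑ w ∈ weights, |w.2| = 39)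

theorem sum_weights_mul_log_div_le :
    ∑ w ∈ weights, w.2 * Real.log w.1 / w.1 ≤ -(4 * Real.log 4 / 5040) := by
  have hprod : ∏ w ∈ weights, (w.1 : ℚ) ^ (w.2 * (5040 / w.1 : ℕ)) ≤ 1 / 4 ^ 4 := by decide +kernel
  have hprod' : ∏ w ∈ weights, (w.1 : ℝ) ^ (w.2 * (5040 / w.1 : ℕ)) ≤ 1 / 4 ^ 4 := by
    simpa using (Rat.cast_le (K := ℝ)).mpr hprod
  have hpos : 0 < ∏ w ∈ weights, (w.1 : ℝ) ^ (w.2 * (5040 / w.1 : ℕ)) :=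
    prod_pos fun w hw ↦ zpow_pos
      (by exact_mod_cast Nat.pos_of_dvd_of_pos (dvd_of_mem_weights w hw) (by norm_num)) _
  have hlog := Real.log_le_log hpos hprod'
  rw [log_prod_zpow_eq dvd_of_mem_weights (by norm_num), one_div, Real.log_inv,
    Real.log_pow] at hlog
  push_cast at hlog
  linarith

theorem floorSum_weights_le_of_lt {s : ℕ} (hs : s < 5040) :
    floorSum weights s ≤ if s = 8 then 1 else 0 := by
  -- Nested ranges keep the kernel's recursion shallow.
  have h : ∀ i < 70, ∀ j < 72,
      floorSum weights (72 * i + j) ≤ if 72 * i + j = 8 then 1 else 0 := by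
    decide +kernel
  simpa only [Nat.div_add_mod] using h (s / 72) (by omega) (s % 72) (Nat.mod_lt _ (by norm_num))

theorem floorSum_weights_le (s : ℕ) :
    floorSum weights s ≤ (if s = 8 then 1 else 0) + if 5040 ≤ s then 1 else 0 := by
  rw [← (floorSum_periodic dvd_of_mem_weights floorSum_weights_self).map_mod_nat]
  have hmod := floorSum_weights_le_of_lt (Nat.mod_lt s (by norm_num : 0 < 5040))
  rcases lt_or_ge s 5040 with hs | hs
  · rw [Nat.mod_eq_of_lt hs] at hmod ⊢
    simpa [hs.not_ge] using hmod
  · rw [if_pos hs]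
    split_ifs at hmod ⊢ <;> omega

/-! ### Large `n` -/

theorem error_terms_lt_main_term {x : ℝ} (hx : 2 ^ 20 ≤ x) :
    3 * (Real.log 4 + 4) * (√(9 * x) + √(x / 70)) + 39 * (Real.log (72 * x) + 1) <
      3 * Real.log 4 / 70 * x := by
  have hx0 : 0 < x := by linarith
  have hlog4 : Real.log 4 = 2 * Real.log 2 := Real.log_four_eq
  have hlt := Real.log_two_lt_d9
  have hgt := Real.log_two_gt_d9
  have hsqrt : 1024 ≤ √x := Real.le_sqrt_of_sq_le (by linarith)
  have hsq : √x * √x = x := Real.mul_self_sqrt hx0.le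
  have h9 : √(9 * x) = 3 * √x := by
    rw [show 9 * x = 3 ^ 2 * x by norm_num, Real.sqrt_mul (by positivity),
      Real.sqrt_sq (by norm_num)]
  have h70 : √(x / 70) ≤ √x / 8 := by
    rw [Real.sqrt_le_left (by positivity), div_pow, Real.sq_sqrt hx0.le]
    linarith
  have hlog : Real.log (72 * x) + 1 ≤ 14 + 72 * x / 2 ^ 20 := by
    have h := Real.log_le_sub_one_of_pos (show 0 < 72 * x / 2 ^ 20 by positivity)
    rw [Real.log_div (by positivity) (by positivity), Real.log_pow] at h
    push_cast at h
    linarith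
  calc 3 * (Real.log 4 + 4) * (√(9 * x) + √(x / 70)) + 39 * (Real.log (72 * x) + 1)
      ≤ 3 * (1.3863 + 4) * (3 * √x + √x / 8) + 39 * (14 + 72 * x / 2 ^ 20) := by
        rw [h9]
        gcongr 3 * (?_ + 4) * (3 * √x + ?_) + 39 * ?_
        linarith
    _ < 3 * 1.386 / 70 * x := by nlinarith
    _ ≤ 3 * Real.log 4 / 70 * x := by gcongr; linarith

theorem le_sum_weights_mul_log_factorial {x : ℕ} (hx : 5040 ≤ x) :
    4 * Real.log 4 / 5040 * x - 39 * (Real.log x + 1) ≤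
      ∑ w ∈ weights, w.2 * Real.log (x / w.1)! := by
  have hstirling := abs_sum_mul_log_factorial_sub_le (W := weights) (x := x) fun w hw ↦
    have hdvd := dvd_of_mem_weights w hw
    ⟨Nat.pos_of_dvd_of_pos hdvd (by norm_num), (Nat.le_of_dvd (by norm_num) hdvd).trans hx⟩
  rw [sum_weights_div_eq_zero, sum_abs_weights, mul_zero, zero_sub] at hstirling
  have hmain := mul_le_mul_of_nonneg_left sum_weights_mul_log_div_le x.cast_nonneg (α := ℝ)
  linarith [(abs_le.mp hstirling).1]

theorem sum_weights_mul_log_factorial_le (x : ℕ) :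
    ∑ w ∈ weights, w.2 * Real.log (x / w.1)! ≤ ψ (x / 8) - ψ (x / 9) + ψ (x / 5040) := by
  rw [sum_mul_log_factorial_eq]
  exact_mod_cast sum_vonMangoldt_mul_le (F := fun s ↦ floorSum weights s) (k := 8) (N := 5040)
    (by norm_num) (by norm_num) (fun s ↦ by exact_mod_cast floorSum_weights_le s) x

theorem theta_eight_mul_lt_theta_nine_mul {n : ℕ} (hn : 2 ^ 20 ≤ n) :
    θ (8 * n) < θ (9 * n) := by
  have hreal : (2 : ℝ) ^ 20 ≤ n := by exact_mod_cast hn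
  have hlower := le_sum_weights_mul_log_factorial (x := 72 * n) (by omega)
  have hupper := sum_weights_mul_log_factorial_le (72 * n)
  push_cast at hlower hupper
  rw [show (72 * n / 8 : ℝ) = 9 * n by ring, show (72 * n / 9 : ℝ) = 8 * n by ring,
    show (72 * n / 5040 : ℝ) = n / 70 by ring] at hupper
  have hψ9 := psi_sub_theta_le_mul_sqrt (x := 9 * n) (by linarith)
  have hψ70 := psi_sub_theta_le_mul_sqrt (x := n / 70) (by linarith)
  have hθ70 := Chebyshev.theta_le_log4_mul_x (x := n / 70) (by positivity)
  have hψ8 := Chebyshev.theta_le_psi (8 * n)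
  linarith [error_terms_lt_main_term hreal]

/-! ### Small `n` -/

theorem exists_mem_of_isChain {k a n : ℕ} {l : List ℕ} (hk : 0 < k) (ha : a ≤ k * n)
    (hchain : (a :: l).IsChain fun p q ↦ q < (k + 1) * (p ⌈/⌉ k)) (hlast : ∃ q ∈ l, k * n < q) :
    ∃ p ∈ l, k * n < p ∧ p < (k + 1) * n := by
  induction l generalizing a with
  | nil => simp at hlast
  | cons p l ih =>
    obtain ⟨hap, hl⟩ := List.isChain_cons_cons.mp hchain
    rcases lt_or_ge (k * n) p with hp | hp
    · refine ⟨p, List.mem_cons_self, hp, hap.trans_le ?_⟩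
      gcongr
      exact (ceilDiv_le_iff_le_mul hk).mpr ha
    · obtain ⟨q, hq, hpq⟩ := ih hp hl (by simpa [hp.not_gt] using hlast)
      exact ⟨q, List.mem_cons_of_mem _ hq, hpq⟩

/-- Primes serving all `n` with `5 ≤ n < 2 ^ 20`, chosen greedily: if `p` is the last prime chosen,
then `n = ⌈p / 8⌉` is the first case not served yet, and the next prime is the largest one below
`9 * n`. The first case is `n = 5`, as if `40` had been chosen before. -/
def primeChain : List ℕ :=
  [43, 53, 61, 71, 79, 89, 107, 113, 131, 151, 167, 181, 199, 223, 251, 283, 317, 359, 401, 457,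
   521, 593, 673, 761, 863, 971, 1097, 1237, 1381, 1553, 1753, 1979, 2221, 2477, 2789, 3137, 3533,
   3967, 4463, 5021, 5651, 6361, 7159, 8053, 9059, 10193, 11471, 12899, 14503, 16301, 18341,
   20627, 23209, 26113, 29383, 33053, 37181, 41813, 47041, 52919, 59513, 66959, 75329, 84751,
   95339, 107251, 120661, 135743, 152681, 171763, 193201, 217351, 244507, 275059, 309437, 348097,
   391613, 440567, 495637, 557591, 627271, 705643, 793853, 893059, 1004687, 1130273, 1271561,
   1430503, 1609301, 1810451, 2036747, 2291327, 2577739, 2899943, 3262429, 3670231, 4129007,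
   4645117, 5225743, 5878927, 6613781, 7440491, 8370553, 9416863]

theorem prime_of_mem_primeChain : ∀ p ∈ primeChain, p.Prime := by
  norm_num [primeChain]

theorem isChain_primeChain : (40 :: primeChain).IsChain fun p q ↦ q < (8 + 1) * (p ⌈/⌉ 8) := by
  decide +kernel

theorem exists_prime_of_lt_two_pow {n : ℕ} (h5 : 5 ≤ n) (hn : n < 2 ^ 20) :
    ∃ p : ℕ, p.Prime ∧ 8 * n < p ∧ p < 9 * n := by
  obtain ⟨p, hp, hpn⟩ := exists_mem_of_isChain (n := n) (by norm_num) (by omega) isChain_primeChain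
    ⟨9416863, by simp [primeChain], by omega⟩
  exact ⟨p, prime_of_mem_primeChain p hp, hpn⟩

theorem prime_between_8n_and_9n :
    ∀ n : ℕ, 5 ≤ n → ∃ p : ℕ, p.Prime ∧ 8 * n < p ∧ p < 9 * n := by
  intro n h5
  rcases lt_or_ge n (2 ^ 20) with hsmall | hlarge
  · exact exists_prime_of_lt_two_pow h5 hsmall
  · obtain ⟨p, hp, h8, h9⟩ :=
      exists_prime_of_theta_lt_theta (theta_eight_mul_lt_theta_nine_mul hlarge)
    have hne : p ≠ 9 * n := fun h ↦ Nat.not_prime_mul (by norm_num) (by omega) (h ▸ hp)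
    exact ⟨p, hp, by exact_mod_cast h8, lt_of_le_of_ne (by exact_mod_cast h9) hne⟩
end

section
/- For every natural number n ≥ 9 and every k with 1 ≤ k ≤ 9, there exists a prime p with (k−1)·n < p ≤ k·n. (Each of the lowest 9 rows of the Sierpiński matrix S_n contains at least one prime, for all n ≥ 9.) -/
/-!
Every interval `(m, 9 m / 8]` with `m ≥ 48` contains a prime, by a refined Chebyshev argument.
Choose integers `c_D` with `∑ c_D / D = 0` such that `F(w) = ∑ c_D ⌊w / D⌋` is `5040`-periodic with
`F(8) ≤ 1`, `F(w) ≤ 0` for all other `w < 2016`, and `F ≤ 1` beyond. From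
`log n! = ∑ Λ(m) ⌊n / m⌋`,

  `∑ c_D log ⌊N / D⌋! = ∑ Λ(m) F(⌊N / m⌋) ≤ ψ(N / 8) - ψ(N / 9) + ψ(N / 2016)`.

By Stirling's formula the left side is at least `(13 log 2 / 5040) N - O(log N)`, which beats
`ψ(N / 2016) ≤ (5 log 2 / 5040) N + O(√N log N)`. Proper prime powers contribute only `O(√N log N)`
to `ψ`, so `(N / 9, N / 8]` contains a prime as soon as `N ≥ 2 ^ 28`; below that, a ladder of primes
with successive ratios at most `9 / 8` suffices. A row of length `n ≥ 6` that starts after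
`m ≤ 8 n` contains `(m, 9 m / 8]`.
-/

open Finset Real Chebyshev Function
open scoped Nat ArithmeticFunction.vonMangoldt

namespace SierpinskiMatrix

/-- The integer-valued Chebyshev function `w ↦ ∑ c_D ⌊w / D⌋` attached to a finite family `s` of
pairs `(D, c_D)`: a divisor with its weight. It is only evaluated at natural numbers, so that its
values on a whole period can be computed. -/
def weightedFloorSum (s : Finset (ℕ × ℤ)) (w : ℕ) : ℤ := ∑ e ∈ s, e.2 * (w / e.1 : ℕ)

lemma weightedFloorSum_periodic {s : Finset (ℕ × ℤ)} {L : ℕ} (hdvd : ∀ e ∈ s, e.1 ∣ L)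
    (hL : weightedFloorSum s L = 0) : Periodic (weightedFloorSum s) L := by
  intro w
  rw [← add_zero (weightedFloorSum s w), ← hL]
  simp only [weightedFloorSum, ← sum_add_distrib, ← mul_add]
  refine sum_congr rfl fun e he ↦ ?_
  rw [Nat.add_div_of_dvd_left (hdvd e he), Nat.cast_add]

lemma sum_div_eq_zero {s : Finset (ℕ × ℤ)} {L : ℕ} (hdvd : ∀ e ∈ s, e.1 ∣ L)
    (hL : weightedFloorSum s L = 0) (hL₀ : L ≠ 0) : ∑ e ∈ s, (e.2 : ℝ) / e.1 = 0 := by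
  have h : ∑ e ∈ s, (e.2 : ℝ) / e.1 * L = (weightedFloorSum s L : ℝ) := by
    simp only [weightedFloorSum, Int.cast_sum, Int.cast_mul, Int.cast_natCast]
    refine sum_congr rfl fun e he ↦ ?_
    rw [Nat.cast_div_charZero (hdvd e he)]; ring
  rw [← sum_mul, hL, Int.cast_zero] at h
  exact (mul_eq_zero.1 h).resolve_right (mod_cast hL₀)

lemma sum_div_mul_log_mul_eq_log_prod {s : Finset (ℕ × ℤ)} {L : ℕ} (hdvd : ∀ e ∈ s, e.1 ∣ L)
    (hL₀ : L ≠ 0) : (∑ e ∈ s, (e.2 : ℝ) / e.1 * log e.1) * L =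
      log (∏ e ∈ s, (e.1 : ℝ) ^ (e.2 * (L / e.1 : ℕ))) := by
  have hne : ∀ e ∈ s, (e.1 : ℝ) ≠ 0 := fun e he ↦
    Nat.cast_ne_zero.2 (ne_zero_of_dvd_ne_zero hL₀ (hdvd e he))
  rw [log_prod fun e he ↦ zpow_ne_zero _ (hne e he), sum_mul]
  refine sum_congr rfl fun e he ↦ ?_
  rw [log_zpow, Int.cast_mul, Int.cast_natCast, Nat.cast_div_charZero (hdvd e he)]
  ring

lemma log_factorial_eq_sum_vonMangoldt (n : ℕ) :
    log n ! = ∑ m ∈ Ioc 0 n, Λ m * (n / m : ℕ) := by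
  rw [← ArithmeticFunction.sum_Ioc_mul_zeta_eq_sum, ArithmeticFunction.vonMangoldt_mul_zeta,
    ← prod_Ico_id_eq_factorial, Nat.cast_prod, log_prod fun k hk ↦ ?_]
  · rfl
  · exact_mod_cast Nat.ne_zero_of_lt (mem_Ico.1 hk).1

lemma log_factorial_div_eq_sum_vonMangoldt (N D : ℕ) :
    log (N / D)! = ∑ m ∈ Ioc 0 N, Λ m * (N / m / D : ℕ) := by
  rw [log_factorial_eq_sum_vonMangoldt]
  simp only [Nat.div_right_comm N _ D]
  refine sum_subset (Ioc_subset_Ioc_right (Nat.div_le_self N D)) fun m hmN hm ↦ ?_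
  have hlt : N / D < m := by
    by_contra! h
    exact hm (mem_Ioc.2 ⟨(mem_Ioc.1 hmN).1, h⟩)
  rw [Nat.div_eq_of_lt hlt, Nat.cast_zero, mul_zero]

lemma sum_mul_log_factorial_div (s : Finset (ℕ × ℤ)) (N : ℕ) :
    ∑ e ∈ s, (e.2 : ℝ) * log (N / e.1)! = ∑ m ∈ Ioc 0 N, Λ m * weightedFloorSum s (N / m) := by
  simp only [weightedFloorSum, log_factorial_div_eq_sum_vonMangoldt, mul_sum, Int.cast_sum,
    Int.cast_mul, Int.cast_natCast]
  rw [sum_comm]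
  simp only [mul_left_comm]

lemma sum_vonMangoldt_mul_ite_le_div {a : ℕ} (ha : a ≠ 0) (N : ℕ) :
    ∑ m ∈ Ioc 0 N, Λ m * (if a ≤ N / m then 1 else 0) = ψ ((N : ℝ) / a) := by
  simp only [psi, mul_ite, mul_one, mul_zero, ← sum_filter, Nat.floor_div_natCast,
    Nat.floor_natCast]
  congr 1
  ext m
  simp only [mem_filter, mem_Ioc, and_assoc]
  refine and_congr_right fun hm ↦ ?_
  rw [Nat.le_div_iff_mul_le hm, Nat.le_div_iff_mul_le (by omega), mul_comm]
  exact and_iff_right_of_imp fun h ↦ (Nat.le_mul_of_pos_right m (by omega)).trans h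

lemma sum_mul_log_factorial_div_le {s : Finset (ℕ × ℤ)} {a b W : ℕ} (ha : a ≠ 0) (hb : b ≠ 0)
    (hW : W ≠ 0) (hs : ∀ w, weightedFloorSum s w ≤
      (if a ≤ w then 1 else 0) - (if b ≤ w then 1 else 0) + (if W ≤ w then 1 else 0)) (N : ℕ) :
    ∑ e ∈ s, (e.2 : ℝ) * log (N / e.1)! ≤
      ψ ((N : ℝ) / a) - ψ ((N : ℝ) / b) + ψ ((N : ℝ) / W) := by
  rw [sum_mul_log_factorial_div, ← sum_vonMangoldt_mul_ite_le_div ha,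
    ← sum_vonMangoldt_mul_ite_le_div hb, ← sum_vonMangoldt_mul_ite_le_div hW, ← sum_sub_distrib,
    ← sum_add_distrib]
  refine sum_le_sum fun m _ ↦ ?_
  rw [← mul_sub, ← mul_add]
  exact mul_le_mul_of_nonneg_left (mod_cast hs (N / m)) ArithmeticFunction.vonMangoldt_nonneg

lemma log_factorial_le {n : ℕ} (hn : n ≠ 0) : log n ! ≤ n * log n - n + log n / 2 + 1 := by
  obtain ⟨k, rfl⟩ := Nat.exists_eq_succ_of_ne_zero hn
  have h : log (Stirling.stirlingSeq (k + 1)) ≤ log (Stirling.stirlingSeq 1) :=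
    Stirling.log_stirlingSeq'_antitone k.zero_le
  rw [Stirling.log_stirlingSeq_formula, Stirling.stirlingSeq_one,
    log_div (by positivity) (by positivity), log_div (by positivity) (by positivity), log_exp,
    log_sqrt zero_le_two, log_mul two_ne_zero (by positivity)] at h
  linarith

lemma mul_log_sub_log_le_sub {a b : ℝ} (ha : 0 < a) (hb : 0 < b) :
    a * (log b - log a) ≤ b - a := by
  rw [← log_div hb.ne' ha.ne']
  calc a * log (b / a) ≤ a * (b / a - 1) := by gcongr; exact log_le_sub_one_of_pos (by positivity)
    _ = b - a := by field_simp

lemma abs_log_factorial_floor_sub_le {x : ℝ} (hx : 1 ≤ x) :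
    |log ⌊x⌋₊! - (x * log x - x)| ≤ log x + 1 := by
  set n := ⌊x⌋₊
  have hn : 1 ≤ n := (Nat.one_le_floor_iff x).2 hx
  have hn' : (1 : ℝ) ≤ n := mod_cast hn
  have hnx : (n : ℝ) ≤ x := Nat.floor_le (by linarith)
  have hxn : x < n + 1 := Nat.lt_floor_add_one x
  have hlogn : 0 ≤ log n := log_nonneg hn'
  have hlog : log n ≤ log x := log_le_log (by linarith) hnx
  have h2pi : 0 ≤ log (2 * π) := log_nonneg (by linarith [pi_gt_three])
  have hupper := log_factorial_le (n := n) (by omega)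
  have hlower := Stirling.le_log_factorial_stirling (n := n) (by omega)
  have hxlogn := mul_log_sub_log_le_sub (a := x) (b := n) (by linarith) (by linarith)
  have hnlogx := mul_log_sub_log_le_sub (a := n) (b := x) (by linarith) (by linarith)
  rw [abs_le]
  constructor
  · nlinarith [mul_nonneg (sub_nonneg.2 hxn.le) (hlogn.trans hlog)]
  · nlinarith [mul_nonneg (sub_nonneg.2 hnx) hlogn]

lemma sub_le_sum_mul_log_factorial_div {s : Finset (ℕ × ℤ)} {N : ℕ}
    (hpos : ∀ e ∈ s, 0 < e.1) (hle : ∀ e ∈ s, e.1 ≤ N) (hs : ∑ e ∈ s, (e.2 : ℝ) / e.1 = 0) :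
    -(∑ e ∈ s, (e.2 : ℝ) / e.1 * log e.1) * N - (∑ e ∈ s, |(e.2 : ℝ)|) * (log N + 1) ≤
      ∑ e ∈ s, (e.2 : ℝ) * log (N / e.1)! := by
  have hterm : ∀ e ∈ s, (e.2 : ℝ) / e.1 * (N * (log N - 1)) - (e.2 : ℝ) / e.1 * log e.1 * N
      - |(e.2 : ℝ)| * (log N + 1) ≤ (e.2 : ℝ) * log (N / e.1)! := by
    rintro ⟨D, c⟩ he
    have hD : (1 : ℝ) ≤ D := mod_cast hpos _ he
    have hDN : (D : ℝ) ≤ N := mod_cast hle _ he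
    have hx : 1 ≤ (N : ℝ) / D := (one_le_div (by linarith)).2 hDN
    have hlog : log ((N : ℝ) / D) = log N - log D := log_div (by linarith) (by linarith)
    have hlog_le : log ((N : ℝ) / D) ≤ log N := by linarith [log_nonneg hD]
    have herr := abs_log_factorial_floor_sub_le hx
    rw [Nat.floor_div_natCast, Nat.floor_natCast] at herr
    have hmul := mul_le_mul_of_nonneg_left (herr.trans (add_le_add_left hlog_le 1))
      (abs_nonneg (c : ℝ))
    rw [← abs_mul, hlog] at hmul
    calc _ = c * ((N : ℝ) / D * (log N - log D) - N / D) - |(c : ℝ)| * (log N + 1) := by ring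
      _ ≤ c * log (N / D)! := by linarith [(abs_le.1 hmul).1]
  refine le_trans (le_of_eq ?_) (sum_le_sum hterm)
  rw [sum_sub_distrib, sum_sub_distrib, ← sum_mul, ← sum_mul, ← sum_mul, hs]
  ring

lemma exists_prime_of_theta_lt {x y : ℝ} (h : θ x < θ y) :
    ∃ p : ℕ, p.Prime ∧ x < p ∧ p ≤ y := by
  by_contra! hno
  refine h.not_ge (sum_le_sum_of_subset_of_nonneg ?_ fun p _ _ ↦ log_natCast_nonneg p)
  intro p hp
  simp only [mem_filter, mem_Ioc] at hp ⊢
  refine ⟨⟨hp.1.1, ?_⟩, hp.2⟩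
  by_contra! hlt
  have := hno p hp.2 (Nat.lt_of_floor_lt hlt)
  exact this.not_ge ((Nat.le_floor_iff' hp.2.ne_zero).1 hp.1.2)

lemma exists_prime_of_lt_psi_sub_psi {x y : ℝ} (hy : 1 ≤ y) (h : 2 * √y * log y < ψ y - ψ x) :
    ∃ p : ℕ, p.Prime ∧ x < p ∧ p ≤ y :=
  exists_prime_of_theta_lt (by linarith [psi_sub_theta_le hy, theta_le_psi x])

/-- The weights `c_D` of the Chebyshev function used here, on divisors of `5040`, found by a
linear program: maximise the leading Stirling coefficient `-∑ c_D log D / D` subject to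
`∑ c_D / D = 0` and to the upper bound of `weightedFloorSum_chebyshevWeights_le`. -/
def chebyshevWeights : Finset (ℕ × ℤ) where
  val := [(8, 1), (9, -1), (16, -1), (18, 1), (24, -1), (28, 1), (40, -1), (45, 1), (48, 1),
    (56, -2), (63, 1), (80, 1), (84, -1), (90, -1), (112, 1), (120, 1), (126, -1), (140, -1),
    (144, -1), (168, 2), (240, -1), (280, 3), (315, -1), (336, -1), (420, 2), (560, -2), (630, 2),
    (840, -4), (1008, 2), (1680, 3), (2520, 1)]
  nodup := by decide

lemma dvd_of_mem_chebyshevWeights : ∀ e ∈ chebyshevWeights, e.1 ∣ 5040 := by decide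

lemma le_of_mem_chebyshevWeights : ∀ e ∈ chebyshevWeights, e.1 ≤ 2520 := by decide

lemma weightedFloorSum_chebyshevWeights_period : weightedFloorSum chebyshevWeights 5040 = 0 := by
  decide

lemma sum_abs_chebyshevWeights : ∑ e ∈ chebyshevWeights, |(e.2 : ℝ)| = 44 := by
  exact_mod_cast show ∑ e ∈ chebyshevWeights, |e.2| = 44 by decide

lemma sum_chebyshevWeights_div_mul_log_le :
    ∑ e ∈ chebyshevWeights, (e.2 : ℝ) / e.1 * log e.1 ≤ -(13 * log 2 / 5040) := by
  have hprodℚ : ∏ e ∈ chebyshevWeights, (e.1 : ℚ) ^ (e.2 * (5040 / e.1 : ℕ)) ≤ (2 ^ 13)⁻¹ := by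
    decide +kernel
  have hprod : ∏ e ∈ chebyshevWeights, (e.1 : ℝ) ^ (e.2 * (5040 / e.1 : ℕ)) ≤ (2 ^ 13)⁻¹ := by
    simpa only [Rat.cast_prod, Rat.cast_zpow, Rat.cast_natCast, Rat.cast_inv, Rat.cast_pow,
      Rat.cast_ofNat] using (Rat.cast_le (K := ℝ)).2 hprodℚ
  have hpos : 0 < ∏ e ∈ chebyshevWeights, (e.1 : ℝ) ^ (e.2 * (5040 / e.1 : ℕ)) :=
    prod_pos fun e he ↦ zpow_pos (Nat.cast_pos.2 <|
      Nat.pos_of_dvd_of_pos (dvd_of_mem_chebyshevWeights e he) (by norm_num)) _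
  have hlog := log_le_log hpos hprod
  rw [← sum_div_mul_log_mul_eq_log_prod dvd_of_mem_chebyshevWeights (by norm_num), log_inv,
    log_pow] at hlog
  push_cast at hlog
  linarith

/-- Residues are written `72 * i + j` to keep the recursion of the kernel computation shallow. -/
lemma weightedFloorSum_chebyshevWeights_le_of_lt : ∀ i < 70, ∀ j < 72,
    weightedFloorSum chebyshevWeights (72 * i + j) ≤ (if 8 ≤ 72 * i + j then 1 else 0) -
      (if 9 ≤ 72 * i + j then 1 else 0) + (if 2016 ≤ 72 * i + j then 1 else 0) := by
  decide +kernel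

lemma weightedFloorSum_chebyshevWeights_le (w : ℕ) : weightedFloorSum chebyshevWeights w ≤
    (if 8 ≤ w then 1 else 0) - (if 9 ≤ w then 1 else 0) + (if 2016 ≤ w then 1 else 0) := by
  have hperiodic := weightedFloorSum_periodic dvd_of_mem_chebyshevWeights
    weightedFloorSum_chebyshevWeights_period
  have hres := weightedFloorSum_chebyshevWeights_le_of_lt (w % 5040 / 72) (by omega)
    (w % 5040 % 72) (by omega)
  rw [Nat.div_add_mod, hperiodic.map_mod_nat] at hres
  refine hres.trans ?_
  split_ifs <;> omega

lemma le_psi_sub_psi_add_psi {N : ℕ} (hN : 2520 ≤ N) :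
    13 * log 2 / 5040 * N - 44 * (log N + 1) ≤
      ψ ((N : ℝ) / 8) - ψ ((N : ℝ) / 9) + ψ ((N : ℝ) / 2016) := by
  have hlower := sub_le_sum_mul_log_factorial_div (N := N)
    (fun e he ↦ Nat.pos_of_dvd_of_pos (dvd_of_mem_chebyshevWeights e he) (by norm_num))
    (fun e he ↦ (le_of_mem_chebyshevWeights e he).trans hN)
    (sum_div_eq_zero dvd_of_mem_chebyshevWeights weightedFloorSum_chebyshevWeights_period
      (by norm_num))
  have hupper := sum_mul_log_factorial_div_le (by norm_num) (by norm_num) (by norm_num)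
    weightedFloorSum_chebyshevWeights_le N
  have hmain := le_neg_of_le_neg sum_chebyshevWeights_div_mul_log_le
  rw [sum_abs_chebyshevWeights] at hlower
  push_cast at hupper
  calc 13 * log 2 / 5040 * N - 44 * (log N + 1)
    _ ≤ -(∑ e ∈ chebyshevWeights, (e.2 : ℝ) / e.1 * log e.1) * N - 44 * (log N + 1) := by gcongr
    _ ≤ _ := hlower.trans hupper

lemma log_le_sqrt_div {x : ℝ} (hx : 2 ^ 28 ≤ x) : log x ≤ √x / 800 := by
  have hsqrt : 2 ^ 14 ≤ √x := le_sqrt_of_sq_le (by linarith)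
  have htangent : log (√x / 2 ^ 14) ≤ √x / 2 ^ 14 - 1 := log_le_sub_one_of_pos (by positivity)
  rw [log_div (by positivity) (by positivity), log_sqrt (by linarith), log_pow] at htangent
  push_cast at htangent
  linarith [log_two_lt_d9]

lemma two_mul_sqrt_mul_log_div_le {x c d : ℝ} (hx : 2 ^ 28 ≤ x) (hc : 0 < c) (hd : 1 ≤ d)
    (hcd : c ^ 2 ≤ d) : 2 * √(x / d) * log (x / d) ≤ x / (400 * c) := by
  have hx₀ : 0 < x := by linarith
  have hsqrt : √(x / d) ≤ √x / c := by
    rw [sqrt_div hx₀.le]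
    gcongr
    exact le_sqrt_of_sq_le hcd
  have hlog : log (x / d) ≤ √x / 800 :=
    (log_le_log (by positivity) (div_le_self hx₀.le hd)).trans (log_le_sqrt_div hx)
  calc 2 * √(x / d) * log (x / d)
    _ ≤ 2 * √(x / d) * (√x / 800) := by gcongr
    _ ≤ 2 * (√x / c) * (√x / 800) := by gcongr
    _ = √x ^ 2 / (400 * c) := by ring
    _ = x / (400 * c) := by rw [sq_sqrt hx₀.le]

lemma exists_prime_gt_div_nine_le_div_eight {N : ℕ} (hN : 2 ^ 28 ≤ N) :
    ∃ p : ℕ, p.Prime ∧ (N : ℝ) / 9 < p ∧ (p : ℝ) ≤ N / 8 := by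
  have hN' : (2 : ℝ) ^ 28 ≤ N := mod_cast hN
  have hpowers : 2 * √((N : ℝ) / 8) * log ((N : ℝ) / 8) ≤ 3 / 3200 * N :=
    (two_mul_sqrt_mul_log_div_le (c := 8 / 3) hN' (by norm_num) (by norm_num)
      (by norm_num)).trans_eq (by ring)
  have htail : ψ ((N : ℝ) / 2016) ≤ (log 2 / 1008 + 1 / 17600) * N := calc
    _ ≤ log 4 * (N / 2016) + 2 * √((N : ℝ) / 2016) * log ((N : ℝ) / 2016) :=
      psi_le (by linarith)
    _ ≤ 2 * log 2 * (N / 2016) + N / (400 * 44) := by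
      rw [log_four_eq]
      gcongr
      exact two_mul_sqrt_mul_log_div_le hN' (by norm_num) (by norm_num) (by norm_num)
    _ = (log 2 / 1008 + 1 / 17600) * N := by ring
  have herror : 44 * (log N + 1) ≤ N / 250000 := by
    have hsqrt : 2 ^ 14 ≤ √(N : ℝ) := le_sqrt_of_sq_le (by linarith)
    have hmul : 2 ^ 14 * √(N : ℝ) ≤ N := by
      nlinarith [mul_self_sqrt (N.cast_nonneg : (0 : ℝ) ≤ N)]
    linarith [log_le_sqrt_div hN']
  have hmain := le_psi_sub_psi_add_psi (N := N) (by omega)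
  have hlog2 := mul_le_mul_of_nonneg_right log_two_gt_d9.le (N.cast_nonneg : (0 : ℝ) ≤ N)
  exact exists_prime_of_lt_psi_sub_psi (by linarith) (by linarith)

lemma exists_prime_of_isChain_of_lt_getLast {a b : ℕ} {l : List ℕ} {q m : ℕ}
    (hl : ∀ p ∈ l, p.Prime) (hc : (q :: l).IsChain fun r p ↦ a * p ≤ b * r) (hq : q ≤ m)
    (hm : m < (q :: l).getLast (List.cons_ne_nil q l)) :
    ∃ p : ℕ, p.Prime ∧ m < p ∧ a * p ≤ b * m := by
  induction l generalizing q with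
  | nil => exact absurd hm hq.not_gt
  | cons p l ih =>
    rw [List.isChain_cons_cons] at hc
    rw [List.getLast_cons_cons] at hm
    rw [List.forall_mem_cons] at hl
    obtain hp | hp := le_or_gt p m
    · exact ih hl.2 hc.2 hp hm
    · exact ⟨p, hl.1, hp, hc.1.trans (Nat.mul_le_mul_left b hq)⟩

/-- Primes climbing from `48` past `2 ^ 28 / 9` with successive ratios at most `9 / 8`, which cover
the range below the reach of the Chebyshev estimate; each is the largest prime allowed by its
predecessor. -/
def primeLadder : List ℕ :=
  [53, 59, 61, 67, 73, 79, 83, 89, 97, 109, 113, 127, 139, 151, 167, 181, 199, 223, 241, 271, 293,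
    317, 353, 397, 443, 491, 547, 613, 683, 761, 853, 953, 1069, 1201, 1327, 1489, 1669, 1877,
    2111, 2371, 2663, 2971, 3331, 3739, 4201, 4723, 5309, 5953, 6691, 7523, 8461, 9511, 10691,
    12011, 13499, 15173, 17053, 19183, 21577, 24251, 27281, 30689, 34519, 38833, 43669, 49123,
    55259, 62143, 69899, 78623, 88427, 99469, 111893, 125863, 141587, 159233, 179119, 201499,
    226669, 254993, 286859, 322709, 363047, 408427, 459479, 516911, 581521, 654209, 735983, 827969,
    931421, 1047841, 1178809, 1326151, 1491913, 1678399, 1888193, 2124197, 2389721, 2688421,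
    3024457, 3402473, 3827767, 4306231, 4844501, 5450041, 6131239, 6897643, 7759831, 8729801,
    9820997, 11048599, 12429671, 13983377, 15731269, 17697677, 19909867, 22398589, 25198399,
    28348193, 31891703]

lemma prime_of_mem_primeLadder : ∀ p ∈ primeLadder, p.Prime := by norm_num [primeLadder]

lemma isChain_primeLadder : (48 :: primeLadder).IsChain fun r p ↦ 8 * p ≤ 9 * r := by
  decide +kernel

lemma exists_prime_gt_eight_mul_le_nine_mul {m : ℕ} (hm : 48 ≤ m) :
    ∃ p : ℕ, p.Prime ∧ m < p ∧ 8 * p ≤ 9 * m := by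
  obtain hlarge | hsmall := le_or_gt (2 ^ 28) (9 * m)
  · obtain ⟨p, hp, hmp, hpm⟩ := exists_prime_gt_div_nine_le_div_eight hlarge
    push_cast at hmp hpm
    refine ⟨p, hp, ?_, ?_⟩
    · exact_mod_cast show (m : ℝ) < p by linarith
    · exact_mod_cast show 8 * (p : ℝ) ≤ 9 * m by linarith
  · have hlast : (48 :: primeLadder).getLast (by simp) = 31891703 := by decide
    exact exists_prime_of_isChain_of_lt_getLast prime_of_mem_primeLadder isChain_primeLadder hm
      (by omega)

lemma exists_prime_mem_Ioc_add_six : ∀ m < 48, ∃ p ∈ Ioc m (m + 6), p.Prime := by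
  decide

end SierpinskiMatrix

open SierpinskiMatrix in
theorem lowest_nine_rows_contain_primes_general {m n : ℕ} (hn : 6 ≤ n) (hm : m ≤ 8 * n) :
    ∃ p : ℕ, p.Prime ∧ m < p ∧ p ≤ m + n := by
  obtain hsmall | hlarge := lt_or_ge m 48
  · obtain ⟨p, hmem, hp⟩ := exists_prime_mem_Ioc_add_six m hsmall
    rw [mem_Ioc] at hmem
    exact ⟨p, hp, hmem.1, by omega⟩
  · obtain ⟨p, hp, hmp, hpm⟩ := exists_prime_gt_eight_mul_le_nine_mul hlarge
    exact ⟨p, hp, hmp, by omega⟩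

theorem lowest_nine_rows_contain_primes :
    ∀ n : ℕ, 9 ≤ n → ∀ k : ℕ, 1 ≤ k → k ≤ 9 →
      ∃ p : ℕ, p.Prime ∧ (k - 1) * n < p ∧ p ≤ k * n := by
  intro n hn k hk hk9
  obtain ⟨j, rfl⟩ := Nat.exists_eq_add_of_le' hk
  rw [Nat.add_sub_cancel, add_one_mul]
  exact lowest_nine_rows_contain_primes_general (by omega) (Nat.mul_le_mul_right n (by omega))
end

section
/- If for every real number x ≥ 117 there exists a prime p with x < p < x + √x, then Sierpiński's Hypothesis H₁ holds: for every natural number n ≥ 2 and every k with 1 ≤ k ≤ n there exists a prime p with (k−1)·n < p ≤ k·n. -/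
/-!
Row `m + 1` of the `n`-th matrix is the window `(x, x + n]` with `x = m * n`, and `m < n` says that
`x + n ≤ n ^ 2`, so `√x ≤ n`. For `117 ≤ x` the assumed prime in `(x, x + √x)` therefore lies in
the window. For `x < 113` the inequality `x + n ≤ n ^ 2` makes the window reach the next prime.
It does not do so for `113 ≤ x < 117`, where the next prime is `127`: the windows `(113, 125]` and
`(113, 126]` contain no prime. But no multiple of `12` or `13` is such an `x`, so `14 ≤ n` there.
-/

lemma lt_add_of_lt_add_sqrt {p x n : ℕ} (hp : (p : ℝ) < x + √x) (hxn : x ≤ n ^ 2) :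
    p < x + n := by
  have hsqrt : √(x : ℝ) ≤ n := Real.sqrt_le_iff.mpr ⟨n.cast_nonneg, by exact_mod_cast hxn⟩
  exact_mod_cast hp.trans_le (add_le_add_right hsqrt (x : ℝ))

lemma exists_prime_mem_Ioc_of_lt_113 {x n : ℕ} (hn : 2 ≤ n) (hx : x < 113)
    (hxn : x + n ≤ n ^ 2) : ∃ p ∈ Finset.Ioc x (x + n), p.Prime := by
  have short_windows : ∀ x < 113, ∀ l ≤ 12, 2 ≤ l → x + l ≤ l ^ 2 →
      ∃ p ∈ Finset.Ioc x (x + l), p.Prime := by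
    decide +kernel
  rcases le_total n 12 with hn12 | hn12
  · exact short_windows x hx n hn12 hn hxn
  · obtain ⟨p, hp, hprime⟩ := short_windows x hx 12 le_rfl (by norm_num) (by omega)
    exact ⟨p, Finset.Ioc_subset_Ioc_right (by omega) hp, hprime⟩

lemma le_add_one_mul_of_mul_mem_Ico {m n : ℕ} (hmn : m < n) (hx : m * n ∈ Set.Ico 113 117) :
    127 ≤ (m + 1) * n := by
  obtain ⟨hlow, hhigh⟩ := hx
  have hm : m ≤ 10 := by nlinarith
  interval_cases m <;> omega

theorem sqrt_gap_conjecture_implies_H1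
    (h : ∀ x : ℝ, 117 ≤ x →
      ∃ p : ℕ, p.Prime ∧ x < (p : ℝ) ∧ (p : ℝ) < x + Real.sqrt x) :
    ∀ n : ℕ, 2 ≤ n → ∀ k : ℕ, 1 ≤ k → k ≤ n →
      ∃ p : ℕ, p.Prime ∧ (k - 1) * n < p ∧ p ≤ k * n := by
  intro n hn k hk hkn
  obtain ⟨m, rfl⟩ := Nat.exists_eq_add_of_le' hk
  rw [Nat.add_sub_cancel]
  have hrow : (m + 1) * n = m * n + n := Nat.succ_mul m n
  have hsq : m * n + n ≤ n ^ 2 := by nlinarith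
  rcases lt_or_ge (m * n) 113 with hsmall | hlow
  · obtain ⟨p, hp, hprime⟩ := exists_prime_mem_Ioc_of_lt_113 hn hsmall hsq
    exact ⟨p, hprime, by simpa [hrow] using hp⟩
  rcases lt_or_ge (m * n) 117 with hhigh | hlarge
  · exact ⟨127, by norm_num, by omega, le_add_one_mul_of_mul_mem_Ico hkn ⟨hlow, hhigh⟩⟩
  · obtain ⟨p, hprime, hlt, hsqrt⟩ := h (m * n : ℕ) (by exact_mod_cast hlarge)
    have hp : p < m * n + n := lt_add_of_lt_add_sqrt hsqrt (by omega)
    exact ⟨p, hprime, by exact_mod_cast hlt, by omega⟩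
end
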